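/- arXiv:2509.19679 — 4 statements merged into one kernel-verified Lean document; each statement's English description precedes it below -/
import Mathlib

section
/- There exists ε > 0 such that for every w ∈ ℝ^m with w_k ≥ −ε for all k, the matrix A(w) := Fᵀ Γ^{-1/2} Diag(w) Γ^{-1/2} F + C0⁻¹ is positive definite (in particular invertible), so that the A-optimal objective J(w) := trace(A(w)⁻¹) is well-defined for all nonnegative and sufficiently small negative values of w. -/
open Matrix

/-- The posterior precision matrix `A(w) = Fᵀ Γ^{-1/2} Diag(w) Γ^{-1/2} F + C0⁻¹`,
where `Γih` plays the role of `Γ^{-1/2}`. -/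
noncomputable def postPrec {m n : ℕ} (F : Matrix (Fin m) (Fin n) ℝ)
    (Γih : Matrix (Fin m) (Fin m) ℝ) (C0 : Matrix (Fin n) (Fin n) ℝ)
    (w : Fin m → ℝ) : Matrix (Fin n) (Fin n) ℝ :=
  Fᵀ * Γih * Matrix.diagonal w * Γih * F + C0⁻¹

/-!
Put `B = Γ^{-1/2} F`. A positive definite matrix dominates a small positive multiple of any
Hermitian one, so `δ BᴴB ≤ C0⁻¹` for some `δ > 0`. If `W ≥ -δ/2`, conjugating by `B` gives
`BᴴWB ≥ -(δ/2) BᴴB ≥ -C0⁻¹/2`, hence `BᴴWB + C0⁻¹ ≥ C0⁻¹/2 > 0`.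
-/

section OrderUnit

variable {A : Type*} [Ring A] [StarRing A] [PartialOrder A] [StarOrderedRing A]
  [TopologicalSpace A] [Algebra ℝ A] [ContinuousFunctionalCalculus ℝ A IsSelfAdjoint]

theorem exists_pos_algebraMap_le_of_isStrictlyPositive [NonnegSpectrumClass ℝ A] {a : A}
    (ha : IsStrictlyPositive a) : ∃ r > (0 : ℝ), algebraMap ℝ A r ≤ a := by
  cases subsingleton_or_nontrivial A
  · exact ⟨1, one_pos, (Subsingleton.elim _ _).le⟩
  exact (CFC.exists_pos_algebraMap_le_iff ha.isSelfAdjoint).2 fun _ hx => ha.spectrum_pos hx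

theorem exists_pos_le_algebraMap_of_isSelfAdjoint {b : A} (hb : IsSelfAdjoint b) :
    ∃ M > (0 : ℝ), b ≤ algebraMap ℝ A M := by
  obtain ⟨M, hM⟩ := (ContinuousFunctionalCalculus.isCompact_spectrum (R := ℝ) b).bddAbove
  exact ⟨max M 1, by positivity, le_algebraMap_of_spectrum_le fun x hx =>
    (hM hx).trans (le_max_left M 1)⟩

theorem exists_pos_smul_le_of_isStrictlyPositive [NonnegSpectrumClass ℝ A] [StarModule ℝ A]
    {a b : A} (ha : IsStrictlyPositive a) (hb : IsSelfAdjoint b) : ∃ δ > (0 : ℝ), δ • b ≤ a := by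
  obtain ⟨r, hr, hra⟩ := exists_pos_algebraMap_le_of_isStrictlyPositive ha
  obtain ⟨M, hM, hbM⟩ := exists_pos_le_algebraMap_of_isSelfAdjoint hb
  refine ⟨r / M, div_pos hr hM, ?_⟩
  calc (r / M) • b ≤ (r / M) • algebraMap ℝ A M := smul_le_smul_of_nonneg_left hbM (by positivity)
    _ = algebraMap ℝ A r := by rw [← algebraMap.coe_smul, smul_eq_mul, div_mul_cancel₀ r hM.ne']
    _ ≤ a := hra

end OrderUnit

section Matrix

open scoped ComplexOrder MatrixOrder

variable {𝕜 ι κ : Type*} [RCLike 𝕜] [Fintype ι] [DecidableEq ι]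

theorem posDef_conjTranspose_mul_mul_add_of_smul_le [Finite κ] {B : Matrix ι κ 𝕜}
    {P : Matrix κ κ 𝕜} (hP : P.PosDef) {δ : ℝ} (hδ : δ • (Bᴴ * B) ≤ P) {W : Matrix ι ι 𝕜}
    (hW : (W + (δ / 2) • (1 : Matrix ι ι 𝕜)).PosSemidef) : (Bᴴ * W * B + P).PosDef := by
  have hhalf : (0 : ℝ) < 1 / 2 := by norm_num
  have hsplit : Bᴴ * W * B + P = Bᴴ * (W + (δ / 2) • (1 : Matrix ι ι 𝕜)) * B +
      (1 / 2 : ℝ) • (P - δ • (Bᴴ * B)) + (1 / 2 : ℝ) • P := by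
    simp only [Matrix.mul_add, Matrix.add_mul, Matrix.mul_smul, Matrix.smul_mul, Matrix.mul_one]
    module
  rw [hsplit]
  exact .posSemidef_add ((hW.conjTranspose_mul_mul_same B).add ((le_iff.1 hδ).smul hhalf.le))
    (hP.smul hhalf)

theorem stmt_1_general [Fintype κ] [DecidableEq κ] (B : Matrix ι κ 𝕜) {P : Matrix κ κ 𝕜}
    (hP : P.PosDef) :
    ∃ ε > (0 : ℝ), ∀ W : Matrix ι ι 𝕜, (W + ε • (1 : Matrix ι ι 𝕜)).PosSemidef →
      (Bᴴ * W * B + P).PosDef ∧ IsUnit (Bᴴ * W * B + P) := by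
  obtain ⟨δ, hδ, hle⟩ := exists_pos_smul_le_of_isStrictlyPositive hP.isStrictlyPositive
    (isHermitian_conjTranspose_mul_self B)
  refine ⟨δ / 2, half_pos hδ, fun W hW => ?_⟩
  have hpos := posDef_conjTranspose_mul_mul_add_of_smul_le hP hle hW
  exact ⟨hpos, hpos.isUnit⟩

end Matrix

theorem posSemidef_diagonal_add_smul_one {ι R : Type*} [DecidableEq ι] [Ring R] [PartialOrder R]
    [StarRing R] [StarOrderedRing R] {w : ι → R} {c : R}
    (hw : ∀ k, -c ≤ w k) : (diagonal w + c • (1 : Matrix ι ι R)).PosSemidef := by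
  rw [smul_one_eq_diagonal, diagonal_add]
  exact .diagonal fun k => neg_le_iff_add_nonneg.1 (hw k)

theorem postPrec_eq_conjTranspose_mul_mul_add {m n : ℕ} (F : Matrix (Fin m) (Fin n) ℝ)
    {Γih : Matrix (Fin m) (Fin m) ℝ} (hΓih : Γih.IsHermitian) (C0 : Matrix (Fin n) (Fin n) ℝ)
    (w : Fin m → ℝ) :
    postPrec F Γih C0 w = (Γih * F)ᴴ * diagonal w * (Γih * F) + C0⁻¹ := by
  rw [postPrec, conjTranspose_mul, hΓih.eq, conjTranspose_eq_transpose_of_trivial]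
  simp only [Matrix.mul_assoc]

theorem stmt_1 {m n : ℕ} (F : Matrix (Fin m) (Fin n) ℝ)
    (Γ Γih : Matrix (Fin m) (Fin m) ℝ) (C0 : Matrix (Fin n) (Fin n) ℝ)
    (hΓ : Γ.PosDef) (hΓdiag : Γ.IsDiag)
    (hΓih : Γih.PosDef) (hΓihdiag : Γih.IsDiag) (hΓihsq : Γih * Γih = Γ⁻¹)
    (hC0 : C0.PosDef) :
    ∃ ε > (0 : ℝ), ∀ w : Fin m → ℝ, (∀ k, -ε ≤ w k) →
      (postPrec F Γih C0 w).PosDef ∧ IsUnit (postPrec F Γih C0 w) := by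
  simp only [postPrec_eq_conjTranspose_mul_mul_add F hΓih.isHermitian]
  obtain ⟨ε, hε, hpos⟩ := stmt_1_general (Γih * F) hC0.inv
  exact ⟨ε, hε, fun w hw => hpos _ (posSemidef_diagonal_add_smul_one hw)⟩
end

section
/- Low-rank trace formula for the A-optimal objective (objective part of the low-rank lemma): set F̃ := Γ^{-1/2} F C0^{1/2} and suppose F̃ᵀ = Q R exactly, where Q : Matrix (Fin n) (Fin ℓ) ℝ satisfies Qᵀ Q = I_ℓ and R : Matrix (Fin ℓ) (Fin m) ℝ. Set C := Qᵀ C0 Q. Then for every w ∈ ℝ^m with nonnegative entries, J(w) = trace(C0) − trace(C) + trace((R Diag(w) Rᵀ + I_ℓ)⁻¹ C). -/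
open Matrix

/-- The A-optimal objective `J(w) = trace(A(w)⁻¹)`. -/
noncomputable def Jobj {m n : ℕ} (F : Matrix (Fin m) (Fin n) ℝ)
    (Γih : Matrix (Fin m) (Fin m) ℝ) (C0 : Matrix (Fin n) (Fin n) ℝ)
    (w : Fin m → ℝ) : ℝ :=
  Matrix.trace ((postPrec F Γih C0 w)⁻¹)

/-!
In the coordinates given by a factor `S` of the prior covariance `S * Sᵀ`, the posterior precision
becomes the identity plus the compressed misfit `Q * (R * W * Rᵀ) * Qᵀ`. As `Q` has orthonormal
columns, the Woodbury identity inverts this on the range of `Q` and leaves the complement alone.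
Undoing the change of coordinates and cycling the trace moves everything to `ℓ × ℓ` matrices.
-/

section CommRing

variable {K l m n : Type*} [CommRing K] [Fintype l] [Fintype n] [DecidableEq n]

lemma trace_mul_one_sub_add_mul (S T : Matrix n n K) (Q : Matrix n l K) (P : Matrix l n K)
    (N : Matrix l l K) :
    trace (S * (1 - Q * P + Q * N * P) * T) =
      trace (S * T) - trace (P * (T * S) * Q) + trace (N * (P * (T * S) * Q)) := by
  have h_cycle (X : Matrix l n K) : trace (S * (Q * X) * T) = trace (X * (T * S) * Q) := by
    rw [trace_mul_cycle, ← Matrix.mul_assoc, trace_mul_cycle, Matrix.mul_assoc]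
  rw [Matrix.mul_add, Matrix.add_mul, Matrix.mul_sub, Matrix.sub_mul, Matrix.mul_one, trace_add,
    trace_sub, Matrix.mul_assoc Q, h_cycle, h_cycle]
  simp only [Matrix.mul_assoc]

lemma inv_eq_mul_mul_mul_inv_mul {S T : Matrix n n K} (hS : IsUnit S) (hT : IsUnit T)
    (A : Matrix n n K) : A⁻¹ = S * (T * A * S)⁻¹ * T := by
  rw [isUnit_iff_isUnit_det] at hS hT
  rw [Matrix.mul_inv_rev, Matrix.mul_inv_rev, mul_nonsing_inv_cancel_left _ _ hS,
    nonsing_inv_mul_cancel_right _ _ hT]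

lemma mul_add_inv_mul_mul {S T : Matrix n n K} (hS : IsUnit S) (hT : IsUnit T)
    (H : Matrix n n K) : T * (H + (S * T)⁻¹) * S = T * H * S + 1 := by
  rw [isUnit_iff_isUnit_det] at hS hT
  rw [Matrix.mul_add, Matrix.add_mul, Matrix.mul_inv_rev, mul_nonsing_inv_cancel_left _ _ hT,
    nonsing_inv_mul _ hS]

variable [DecidableEq l]

lemma inv_mul_mul_add_one {Q : Matrix n l K} {P : Matrix l n K} (hPQ : P * Q = 1)
    {M : Matrix l l K} (hM : IsUnit (M + 1)) :
    (Q * M * P + 1)⁻¹ = 1 - Q * P + Q * (M + 1)⁻¹ * P := by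
  have hP_QM : P * (Q * M) = M := by rw [← Matrix.mul_assoc, hPQ, Matrix.one_mul]
  have h_resolvent : M * (M + 1)⁻¹ = 1 - (M + 1)⁻¹ := by
    rw [eq_sub_iff_add_eq, ← add_one_mul, mul_nonsing_inv _ ((isUnit_iff_isUnit_det _).mp hM)]
  -- `M` need not be invertible, so it goes into the left factor instead of the middle one.
  have h_woodbury : (1 + Q * M * P)⁻¹ = 1 - Q * M * (M + 1)⁻¹ * P := by
    simpa [hP_QM, add_comm M] using
      add_mul_mul_inv_eq_sub 1 (Q * M) 1 P isUnit_one isUnit_one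
        (by simpa [hP_QM, add_comm M] using hM)
  rw [add_comm, h_woodbury, Matrix.mul_assoc Q, h_resolvent, Matrix.mul_sub, Matrix.sub_mul,
    Matrix.mul_one, sub_sub_eq_add_sub, add_sub_right_comm]

lemma inv_add_inv_mul_eq {S T H : Matrix n n K} (hS : IsUnit S) (hT : IsUnit T)
    {Q : Matrix n l K} {P : Matrix l n K} (hPQ : P * Q = 1) {M : Matrix l l K}
    (hM : IsUnit (M + 1)) (hH : T * H * S = Q * M * P) :
    (H + (S * T)⁻¹)⁻¹ = S * (1 - Q * P + Q * (M + 1)⁻¹ * P) * T := by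
  rw [inv_eq_mul_mul_mul_inv_mul hS hT, mul_add_inv_mul_mul hS hT, hH, inv_mul_mul_add_one hPQ hM]

theorem stmt_9_general [Fintype m] (B : Matrix m n K) (W : Matrix m m K) {S : Matrix n n K}
    (hS : IsUnit S) {Q : Matrix n l K} {R : Matrix l m K} (hQR : (B * S)ᵀ = Q * R)
    (hQ : Qᵀ * Q = 1) (hRW : IsUnit (R * W * Rᵀ + 1)) :
    trace (Bᵀ * W * B + (S * Sᵀ)⁻¹)⁻¹ =
      trace (S * Sᵀ) - trace (Qᵀ * (Sᵀ * S) * Q) +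
        trace ((R * W * Rᵀ + 1)⁻¹ * (Qᵀ * (Sᵀ * S) * Q)) := by
  have hBS : B * S = Rᵀ * Qᵀ := by rw [← transpose_mul, ← hQR, transpose_transpose]
  have h_misfit : Sᵀ * (Bᵀ * W * B) * S = Q * (R * W * Rᵀ) * Qᵀ := calc
    Sᵀ * (Bᵀ * W * B) * S = (B * S)ᵀ * W * (B * S) := by
      simp only [transpose_mul, Matrix.mul_assoc]
    _ = Q * (R * W * Rᵀ) * Qᵀ := by rw [hQR, hBS]; simp only [Matrix.mul_assoc]
  have hSt : IsUnit Sᵀ := by rwa [isUnit_transpose]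
  rw [inv_add_inv_mul_eq hS hSt hQ hRW h_misfit, trace_mul_one_sub_add_mul]

end CommRing

lemma posDef_mul_mul_conjTranspose_add_one {A l m : Type*} [Ring A] [PartialOrder A] [StarRing A]
    [StarOrderedRing A] [NoZeroDivisors A] [Finite l] [DecidableEq l] [Fintype m]
    {W : Matrix m m A} (hW : W.PosSemidef) (R : Matrix l m A) : (R * W * Rᴴ + 1).PosDef := by
  cases nonempty_fintype l
  exact .posSemidef_add (hW.mul_mul_conjTranspose_same R) .one

lemma postPrec_eq_of_isSymm {m n : ℕ} (F : Matrix (Fin m) (Fin n) ℝ)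
    {Γih : Matrix (Fin m) (Fin m) ℝ} (hΓih : Γih.IsSymm) (C0 : Matrix (Fin n) (Fin n) ℝ)
    (w : Fin m → ℝ) :
    postPrec F Γih C0 w = (Γih * F)ᵀ * diagonal w * (Γih * F) + C0⁻¹ := by
  rw [postPrec, transpose_mul, hΓih.eq, ← Matrix.mul_assoc]

theorem stmt_9 {m n ℓ : ℕ} (F : Matrix (Fin m) (Fin n) ℝ)
    (Γ Γih : Matrix (Fin m) (Fin m) ℝ) (C0 C0h : Matrix (Fin n) (Fin n) ℝ)
    (hΓ : Γ.PosDef) (hΓdiag : Γ.IsDiag)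
    (hΓih : Γih.PosDef) (hΓihdiag : Γih.IsDiag) (hΓihsq : Γih * Γih = Γ⁻¹)
    (hC0 : C0.PosDef) (hC0h : C0h.PosDef) (hC0hsq : C0h * C0h = C0)
    (Ftilde : Matrix (Fin m) (Fin n) ℝ) (hFtilde : Ftilde = Γih * F * C0h)
    (Q : Matrix (Fin n) (Fin ℓ) ℝ) (R : Matrix (Fin ℓ) (Fin m) ℝ)
    (hQR : Ftildeᵀ = Q * R) (hQ : Qᵀ * Q = 1)
    (C : Matrix (Fin ℓ) (Fin ℓ) ℝ) (hC : C = Qᵀ * C0 * Q)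
    (w : Fin m → ℝ) (hw : ∀ k, 0 ≤ w k) :
    Jobj F Γih C0 w =
      Matrix.trace C0 - Matrix.trace C +
        Matrix.trace ((R * Matrix.diagonal w * Rᵀ + 1)⁻¹ * C) := by
  have hΓih_symm : Γih.IsSymm := isHermitian_iff_isSymm.mp hΓih.isHermitian
  have hC0h_symm : C0hᵀ = C0h := isHermitian_iff_isSymm.mp hC0h.isHermitian
  have hRW : IsUnit (R * diagonal w * Rᵀ + 1) :=
    (posDef_mul_mul_conjTranspose_add_one (.diagonal hw) R).isUnit
  rw [hFtilde] at hQR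
  rw [Jobj, postPrec_eq_of_isSymm F hΓih_symm, hC]
  simpa only [hC0h_symm, hC0hsq] using
    stmt_9_general (Γih * F) (diagonal w) hC0h.isUnit hQR hQ hRW
end

section
/- Low-rank gradient formula (gradient part of the low-rank lemma): let R : Matrix (Fin ℓ) (Fin m) ℝ, let C : Matrix (Fin ℓ) (Fin ℓ) ℝ be symmetric positive semidefinite with positive semidefinite square root C^{1/2}, and let w ∈ ℝ^m have nonnegative entries. Then the function G(w) := trace((R Diag(w) Rᵀ + I_ℓ)⁻¹ C) is differentiable at w and its partial derivative with respect to w_k equals −‖C^{1/2} (R Diag(w) Rᵀ + I_ℓ)⁻¹ r_k‖², where r_k ∈ ℝ^ℓ is the k-th column of R; in particular every partial derivative of G is nonpositive. -/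
open Matrix

/-- The low-rank objective `G(w) = trace((R Diag(w) Rᵀ + I)⁻¹ C)`. -/
noncomputable def Gobj {ℓ m : ℕ} (R : Matrix (Fin ℓ) (Fin m) ℝ)
    (C : Matrix (Fin ℓ) (Fin ℓ) ℝ) (w : Fin m → ℝ) : ℝ :=
  Matrix.trace ((R * Matrix.diagonal w * Rᵀ + 1)⁻¹ * C)

/-- Euclidean norm of a vector in `Fin ℓ → ℝ`. -/
noncomputable def euclNorm {ℓ : ℕ} (v : Fin ℓ → ℝ) : ℝ :=
  ‖(EuclideanSpace.equiv (Fin ℓ) ℝ).symm v‖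

/-! Differentiating `A⁻¹` gives `d tr(A⁻¹ C) = -tr(A⁻¹ C A⁻¹ dA)`. Increasing `w k` changes
`A = R Diag(w) Rᵀ + M` along the rank-one matrix `r rᵀ`, where `r` is the `k`-th column of `R`. For
`C = Hᵀ H` and `A` symmetric this turns the trace into `tr((H A⁻¹)ᵀ (H A⁻¹) r rᵀ) = ‖H A⁻¹ r‖²`. -/

section TraceInverse

/-- The trace pairing `X ↦ tr(A X)`, the form in which derivatives of scalar functions of a matrix
are expressed. -/
def traceMulLeft {α m n : Type*} [CommSemiring α] [TopologicalSpace α] [IsTopologicalSemiring α]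
    [Fintype m] [Fintype n] (A : Matrix m n α) : Matrix n m α →L[α] α where
  toLinearMap := traceLinearMap m α α ∘ₗ mulLeftLinearMap m α A
  cont := (continuous_const.matrix_mul continuous_id).matrix_trace

theorem traceMulLeft_apply {α m n : Type*} [CommSemiring α] [TopologicalSpace α]
    [IsTopologicalSemiring α] [Fintype m] [Fintype n] (A : Matrix m n α) (X : Matrix n m α) :
    traceMulLeft A X = trace (A * X) := rfl

variable {𝕜 n : Type*} [NontriviallyNormedField 𝕜] [CompleteSpace 𝕜] [Fintype n] [DecidableEq n]

open scoped Matrix.Norms.Operator in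
theorem hasFDerivAt_matrix_inv {A : Matrix n n 𝕜} (hA : IsUnit A) :
    HasFDerivAt (fun X : Matrix n n 𝕜 => X⁻¹)
      (-ContinuousLinearMap.mulLeftRight 𝕜 (Matrix n n 𝕜) A⁻¹ A⁻¹) A := by
  -- Instance search does not identify the uniformity of the norm with the product uniformity.
  have : HasSummableGeomSeries (Matrix n n 𝕜) :=
    @instHasSummableGeomSeriesOfCompleteSpace _ _ (instCompleteSpace n n 𝕜)
  obtain ⟨u, rfl⟩ := hA
  simpa only [← coe_units_inv] using (hasFDerivAt_ringInverse (𝕜 := 𝕜) u).congr_of_eventuallyEq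
    (.of_forall nonsing_inv_eq_ringInverse)

open scoped Matrix.Norms.Operator in
theorem hasFDerivAt_trace_inv_mul {A : Matrix n n 𝕜} (hA : IsUnit A) (C : Matrix n n 𝕜) :
    HasFDerivAt (fun X : Matrix n n 𝕜 => trace (X⁻¹ * C)) (-traceMulLeft (A⁻¹ * C * A⁻¹)) A := by
  have h_comp := (traceMulLeft C).hasFDerivAt.comp A (hasFDerivAt_matrix_inv hA)
  simp only [Function.comp_def, traceMulLeft_apply, trace_mul_comm C] at h_comp
  refine h_comp.congr_fderiv (ContinuousLinearMap.ext fun X => ?_)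
  calc
    trace (C * -(A⁻¹ * X * A⁻¹)) = -trace (C * (A⁻¹ * X) * A⁻¹) := by
      rw [Matrix.mul_neg, trace_neg, ← Matrix.mul_assoc C]
    _ = -trace (A⁻¹ * C * A⁻¹ * X) := by
      rw [trace_mul_comm]
      simp only [Matrix.mul_assoc]

end TraceInverse

section WeightedGram

variable {α m n : Type*} [CommSemiring α] [TopologicalSpace α] [IsTopologicalSemiring α]
  [Fintype m] [DecidableEq m]

/-- The map `w ↦ R Diag(w) Rᵀ`, the sum of the rank-one matrices `r rᵀ` over the columns `r` of `R`
weighted by `w`. It is bundled as a continuous linear map so that it is its own derivative. -/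
def weightedGram (R : Matrix n m α) : (m → α) →L[α] Matrix n n α where
  toLinearMap := mulRightLinearMap n α Rᵀ ∘ₗ mulLeftLinearMap m α R ∘ₗ diagonalLinearMap m α α
  cont := (continuous_const.matrix_mul continuous_id.matrix_diagonal).matrix_mul continuous_const

theorem weightedGram_apply (R : Matrix n m α) (w : m → α) :
    weightedGram R w = R * diagonal w * Rᵀ := rfl

theorem weightedGram_single_one (R : Matrix n m α) (k : m) :
    weightedGram R (Pi.single k 1) = vecMulVec (R.col k) (R.col k) := by
  ext i j
  simp [weightedGram_apply, mul_apply, vecMulVec_apply, diagonal_apply, Pi.single_apply]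

theorem isSymm_weightedGram (R : Matrix n m α) (w : m → α) : (weightedGram R w).IsSymm := by
  simp [IsSymm, weightedGram_apply, Matrix.mul_assoc]

theorem posDef_weightedGram_add [Finite n] (R : Matrix n m ℝ) {M : Matrix n n ℝ} (hM : M.PosDef)
    {w : m → ℝ} (hw : 0 ≤ w) : (weightedGram R w + M).PosDef := by
  have h_posSemidef : (weightedGram R w).PosSemidef := by
    simpa [weightedGram_apply] using (PosSemidef.diagonal hw).mul_mul_conjTranspose_same R
  exact PosDef.posSemidef_add h_posSemidef hM

open scoped Matrix.Norms.Operator in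
theorem hasFDerivAt_trace_inv_weightedGram_add_mul {𝕜 : Type*} [NontriviallyNormedField 𝕜]
    [CompleteSpace 𝕜] [Fintype n] [DecidableEq n] (R : Matrix n m 𝕜) (C M : Matrix n n 𝕜)
    {w : m → 𝕜} (hw : IsUnit (weightedGram R w + M)) :
    HasFDerivAt (fun v => trace ((weightedGram R v + M)⁻¹ * C))
      ((-traceMulLeft ((weightedGram R w + M)⁻¹ * C * (weightedGram R w + M)⁻¹)) ∘L weightedGram R)
      w := by
  have h_affine : HasFDerivAt (fun v => weightedGram R v + M) (weightedGram R) w :=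
    (weightedGram R).hasFDerivAt.add_const M
  exact (hasFDerivAt_trace_inv_mul hw C).comp w h_affine

end WeightedGram

theorem trace_transpose_mul_self_mul_vecMulVec {α n p : Type*} [CommSemiring α] [Fintype n]
    [Fintype p] (K : Matrix p n α) (u v : n → α) :
    trace (Kᵀ * K * vecMulVec u v) = (K *ᵥ u) ⬝ᵥ (K *ᵥ v) := by
  rw [mul_vecMulVec, trace_vecMulVec, ← mulVec_mulVec, mulVec_transpose, dotProduct_mulVec]

theorem stmt_10_general {m n p : Type*} [Fintype m] [DecidableEq m] [Fintype n] [DecidableEq n]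
    [Fintype p] (R : Matrix n m ℝ) {C M : Matrix n n ℝ} {H : Matrix p n ℝ} (hM : M.IsSymm)
    (hC : Hᵀ * H = C) {w : m → ℝ} (hw : IsUnit (R * diagonal w * Rᵀ + M)) :
    DifferentiableAt ℝ (fun v => trace ((R * diagonal v * Rᵀ + M)⁻¹ * C)) w ∧
      (∀ k, fderiv ℝ (fun v => trace ((R * diagonal v * Rᵀ + M)⁻¹ * C)) w (Pi.single k 1) =
        -‖WithLp.toLp 2 (H *ᵥ ((R * diagonal w * Rᵀ + M)⁻¹ *ᵥ R.col k))‖ ^ 2) ∧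
      ∀ k, fderiv ℝ (fun v => trace ((R * diagonal v * Rᵀ + M)⁻¹ * C)) w (Pi.single k 1) ≤ 0 := by
  simp only [← weightedGram_apply] at hw ⊢
  have h_deriv := hasFDerivAt_trace_inv_weightedGram_add_mul R C M hw
  set B := (weightedGram R w + M)⁻¹
  have hB : Bᵀ = B := ((isSymm_weightedGram R w).add hM).inv
  have h_factor : B * C * B = (H * B)ᵀ * (H * B) := by
    rw [← hC, transpose_mul, hB]
    simp only [Matrix.mul_assoc]
  have h_partial (k : m) :
      fderiv ℝ (fun v => trace ((weightedGram R v + M)⁻¹ * C)) w (Pi.single k 1) =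
        -‖WithLp.toLp 2 (H *ᵥ (B *ᵥ R.col k))‖ ^ 2 :=
    calc
      _ = -trace (B * C * B * weightedGram R (Pi.single k 1)) := by rw [h_deriv.fderiv]; rfl
      _ = -(((H * B) *ᵥ R.col k) ⬝ᵥ ((H * B) *ᵥ R.col k)) := by
        rw [h_factor, weightedGram_single_one, trace_transpose_mul_self_mul_vecMulVec]
      _ = _ := by
        rw [← mulVec_mulVec, EuclideanSpace.real_norm_sq_eq]
        simp only [dotProduct, sq]
  exact ⟨h_deriv.differentiableAt, h_partial, fun k => (h_partial k).trans_le (by simp)⟩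

theorem stmt_10 {ℓ m : ℕ} (R : Matrix (Fin ℓ) (Fin m) ℝ)
    (C Chalf : Matrix (Fin ℓ) (Fin ℓ) ℝ)
    (hC : C.PosSemidef) (hChalf : Chalf.PosSemidef) (hChalfsq : Chalf * Chalf = C)
    (w : Fin m → ℝ) (hw : ∀ k, 0 ≤ w k) :
    DifferentiableAt ℝ (Gobj R C) w ∧
      (∀ k : Fin m,
        fderiv ℝ (Gobj R C) w (Pi.single k 1) =
          -(euclNorm (Chalf.mulVec
              ((R * Matrix.diagonal w * Rᵀ + 1)⁻¹.mulVec (fun i => R i k))))^2) ∧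
      (∀ k : Fin m, fderiv ℝ (Gobj R C) w (Pi.single k 1) ≤ 0) := by
  have h_factor : Chalfᵀ * Chalf = C := by
    rw [(isHermitian_iff_isSymm.mp hChalf.isHermitian).eq, hChalfsq]
  exact stmt_10_general R isSymm_one h_factor (posDef_weightedGram_add R PosDef.one hw).isUnit
end

section
/- Convexity of the relaxed A-optimal objective: let R : Matrix (Fin ℓ) (Fin m) ℝ and let C : Matrix (Fin ℓ) (Fin ℓ) ℝ be symmetric positive semidefinite. Then the map w ↦ trace((R Diag(w) Rᵀ + I_ℓ)⁻¹ C) is convex on the nonnegative orthant { w ∈ ℝ^m : w_k ≥ 0 for all k }. -/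
open Matrix

/-! For positive definite `A`, the Schur complement criterion says that `A⁻¹ ≤ D` in the Loewner
order if and only if the block matrix `[A, 1; 1, D]` is positive semidefinite. The latter condition
is stable under convex combinations of the pair `(A, D)`, so matrix inversion is operator convex.
The functional `X ↦ trace (X * C)` is monotone for positive semidefinite `C`, and
`w ↦ R * diagonal w * Rᴴ + P` is affine. -/

section RCLike

open scoped ComplexOrder MatrixOrder

variable {𝕜 m n : Type*} [RCLike 𝕜]

theorem convex_setOf_posDef : Convex ℝ {A : Matrix n n 𝕜 | A.PosDef} :=
  convex_iff_forall_pos.mpr fun _ hA _ hB _ _ ha hb _ ↦ (hA.smul ha).add (hB.smul hb)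

theorem posDef_mul_diagonal_mul_conjTranspose_add [Fintype m] [DecidableEq m] [Finite n]
    (R : Matrix n m 𝕜) {P : Matrix n n 𝕜} (hP : P.PosDef) {w : m → 𝕜} (hw : 0 ≤ w) :
    (R * diagonal w * Rᴴ + P).PosDef :=
  .posSemidef_add ((PosSemidef.diagonal hw).mul_mul_conjTranspose_same R) hP

variable [Fintype n]

theorem trace_mul_nonneg_of_posSemidef {A C : Matrix n n 𝕜} (hA : A.PosSemidef)
    (hC : C.PosSemidef) : 0 ≤ (A * C).trace := by
  classical
  obtain ⟨B, rfl⟩ := CStarAlgebra.nonneg_iff_eq_star_mul_self.mp hC.nonneg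
  rw [star_eq_conjTranspose, ← mul_assoc, trace_mul_comm, ← mul_assoc]
  exact (hA.mul_mul_conjTranspose_same B).trace_nonneg

theorem trace_mul_le_trace_mul_of_posSemidef {A B C : Matrix n n 𝕜} (hAB : A ≤ B)
    (hC : C.PosSemidef) : (A * C).trace ≤ (B * C).trace := by
  simpa only [sub_mul, trace_sub, sub_nonneg] using
    trace_mul_nonneg_of_posSemidef (le_iff.mp hAB) hC

variable [DecidableEq n]

theorem posSemidef_fromBlocks_one_one_iff_inv_le {A D : Matrix n n 𝕜} (hA : A.PosDef) :
    (fromBlocks A 1 1 D).PosSemidef ↔ A⁻¹ ≤ D := by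
  have := hA.isUnit.invertible
  simpa only [conjTranspose_one, one_mul, mul_one, ← le_iff] using hA.fromBlocks₁₁ 1 D

theorem convexOn_matrix_inv : ConvexOn ℝ {A : Matrix n n 𝕜 | A.PosDef} (·⁻¹) := by
  refine ⟨convex_setOf_posDef, fun A hA B hB a b ha hb hab ↦ ?_⟩
  have block_posSemidef {X : Matrix n n 𝕜} (hX : X.PosDef) : (fromBlocks X 1 1 X⁻¹).PosSemidef :=
    (posSemidef_fromBlocks_one_one_iff_inv_le hX).mpr le_rfl
  have block_combination : a • fromBlocks A 1 1 A⁻¹ + b • fromBlocks B 1 1 B⁻¹ =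
      fromBlocks (a • A + b • B) 1 1 (a • A⁻¹ + b • B⁻¹) := by
    simp only [fromBlocks_smul, fromBlocks_add, ← add_smul, hab, one_smul]
  rw [← posSemidef_fromBlocks_one_one_iff_inv_le (convex_setOf_posDef hA hB ha hb hab),
    ← block_combination]
  exact ((block_posSemidef hA).smul ha).add ((block_posSemidef hB).smul hb)

theorem convexOn_trace_inv_mul {C : Matrix n n 𝕜} (hC : C.PosSemidef) :
    ConvexOn ℝ {A : Matrix n n 𝕜 | A.PosDef} fun A ↦ (A⁻¹ * C).trace := by
  refine ⟨convex_setOf_posDef, fun A hA B hB a b ha hb hab ↦ ?_⟩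
  calc ((a • A + b • B)⁻¹ * C).trace
      ≤ ((a • A⁻¹ + b • B⁻¹) * C).trace :=
        trace_mul_le_trace_mul_of_posSemidef (convexOn_matrix_inv.2 hA hB ha hb hab) hC
    _ = a • (A⁻¹ * C).trace + b • (B⁻¹ * C).trace := by
        simp only [add_mul, smul_mul_assoc, trace_add, trace_smul]

theorem stmt_11_general [Fintype m] [DecidableEq m] (R : Matrix n m 𝕜) {P C : Matrix n n 𝕜}
    (hP : P.PosDef) (hC : C.PosSemidef) :
    ConvexOn ℝ (Set.Ici 0) fun w : m → 𝕜 ↦ ((R * diagonal w * Rᴴ + P)⁻¹ * C).trace := by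
  let congruence : (m → 𝕜) →ₗ[ℝ] Matrix n n 𝕜 :=
    mulRightLinearMap n ℝ Rᴴ ∘ₗ mulLeftLinearMap m ℝ R ∘ₗ diagonalLinearMap m ℝ 𝕜
  let shiftedCongruence : (m → 𝕜) →ᵃ[ℝ] Matrix n n 𝕜 :=
    congruence.toAffineMap + AffineMap.const ℝ _ P
  exact ((convexOn_trace_inv_mul hC).comp_affineMap shiftedCongruence).subset
    (fun _ hw ↦ posDef_mul_diagonal_mul_conjTranspose_add R hP hw) (convex_Ici 0)

end RCLike

theorem stmt_11 {ℓ m : ℕ} (R : Matrix (Fin ℓ) (Fin m) ℝ)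
    (C : Matrix (Fin ℓ) (Fin ℓ) ℝ) (hC : C.PosSemidef) :
    ConvexOn ℝ {w : Fin m → ℝ | ∀ k, 0 ≤ w k} (Gobj R C) :=
  stmt_11_general R .one hC
end
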